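/- arXiv:1912.10932 — 5 statements merged into one kernel-verified Lean document; each statement's English description precedes it below -/
import Mathlib

section
/- Let R be a commutative ring and I ⊆ R an ideal contained in every maximal ideal of R. Then there exists a commutative R-algebra R̃ such that: (i) R̃ is faithfully flat over R; (ii) R̃ is a filtered colimit of étale R-algebras (R̃ is ind-étale over R); (iii) the pair (R̃, I·R̃) is Henselian; and (iv) every faithfully flat étale R̃-algebra S admits an R̃-algebra homomorphism S → R̃, i.e. every étale cover of R̃ splits. -/
universe u

/-- Data witnessing that `R̃` (the field `At`) is a faithfully flat, ind-étale `R`-algebra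
which is Henselian along `I·R̃` and over which every étale cover splits: it is exhibited as a
filtered colimit of étale `R`-algebras. -/
structure IndEtaleSplittingAlgebra (R : Type u) [CommRing R] (I : Ideal R) where
  /-- the `R`-algebra `R̃` -/
  At : Type u
  [commRing : CommRing At]
  [alg : Algebra R At]
  /-- (i) `R̃` is faithfully flat over `R` -/
  faithfullyFlat : Module.FaithfullyFlat R At
  /-- the filtered index of the ind-étale presentation -/
  ι : Type u
  [preorder : Preorder ι]
  directed : IsDirected ι (· ≤ ·)
  nonempty_ι : Nonempty ι
  /-- the directed system of étale `R`-algebras -/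
  A : ι → Type u
  [commRingA : ∀ i, CommRing (A i)]
  [algA : ∀ i, Algebra R (A i)]
  etaleA : ∀ i, Algebra.Etale R (A i)
  /-- the transition maps of the directed system -/
  t : ∀ {i j : ι}, i ≤ j → (A i →ₐ[R] A j)
  t_id : ∀ (i : ι) (x : A i), t (le_refl i) x = x
  t_comp : ∀ {i j k : ι} (hij : i ≤ j) (hjk : j ≤ k) (x : A i),
    t hjk (t hij x) = t (hij.trans hjk) x
  /-- the maps to the colimit -/
  g : ∀ i, A i →ₐ[R] At
  g_comp : ∀ {i j : ι} (h : i ≤ j) (x : A i), g j (t h x) = g i x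
  /-- (ii) `R̃` is the filtered colimit of the system: the maps to it are jointly
  surjective … -/
  g_jointly_surjective : ∀ x : At, ∃ (i : ι) (a : A i), g i a = x
  /-- … and two elements identified in `R̃` are identified already at a finite stage -/
  g_eq_eventually : ∀ (i : ι) (x y : A i), g i x = g i y → ∃ (j : ι) (h : i ≤ j), t h x = t h y
  /-- (iii) the pair `(R̃, I·R̃)` is Henselian -/
  henselian : HenselianRing At (I.map (algebraMap R At))
  /-- (iv) every faithfully flat, étale `R̃`-algebra admits an `R̃`-point,
  i.e. every étale cover of `R̃` splits -/
  splits : ∀ (S : Type u) [CommRing S] [Algebra At S],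
    Module.FaithfullyFlat At S → Algebra.Etale At S → Nonempty (S →ₐ[At] At)





namespace IndEtaleAux

open TensorProduct Polynomial CategoryTheory

/-! ### Generic commutative algebra -/

theorem faithfullyFlat_of_maps {T B : Type u} [CommRing T] [CommRing B] [Algebra T B]
    [Module.Flat T B]
    (H : ∀ n : Ideal T, n.IsMaximal → ∃ (C : Type u) (_ : CommRing C) (_ : Nontrivial C)
      (f : B →+* C), ∀ x ∈ n, f (algebraMap T B x) = 0) :
    Module.FaithfullyFlat T B := by
  refine ⟨fun n hn h => ?_⟩
  obtain ⟨C, _, _, f, hf⟩ := H n hn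
  have hle : n.map (algebraMap T B) ≤ RingHom.ker f := by
    rw [Ideal.map_le_iff_le_comap]
    intro x hx
    exact hf x hx
  rw [Ideal.smul_top_eq_map] at h
  have h1 : (1 : B) ∈ n.map (algebraMap T B) := by
    have : (1 : B) ∈ (Submodule.restrictScalars T (n.map (algebraMap T B))) := by
      rw [h]; trivial
    exact this
  have := hle h1
  rw [RingHom.mem_ker, map_one] at this
  exact one_ne_zero this

theorem henselian_of_splits {T : Type u} [CommRing T] (J : Ideal T)
    (hJ : J ≤ Ideal.jacobson ⊥)
    (hs : ∀ (S : Type u) [CommRing S] [Algebra T S],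
      Module.FaithfullyFlat T S → Algebra.Etale T S → Nonempty (S →ₐ[T] T)) :
    HenselianRing T J := by
  refine ⟨hJ, fun f hf a₀ h₁ h₂ => ?_⟩
  have hloc := isLocalHom_of_le_jacobson_bot J hJ
  have hu : IsUnit (f.derivative.eval a₀) := hloc.map_nonunit _ h₂
  let h : T[X] := f /ₘ (X - C a₀)
  have hfh : f = C (f.eval a₀) + (X - C a₀) * h := by
    conv_lhs => rw [← modByMonic_add_div f (X - C a₀)]
    rw [modByMonic_X_sub_C_eq_C_eval]
  have hha : h.eval a₀ = f.derivative.eval a₀ := by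
    conv_rhs => rw [hfh]
    simp
  let P : StandardEtalePair T := ⟨f, hf, f.derivative * h, h, 0, 1, by simp⟩
  have hff : Module.FaithfullyFlat T P.Ring := by
    refine faithfullyFlat_of_maps fun n hn => ?_
    have hJn : J ≤ n := hJ.trans (by
      rw [Ideal.jacobson]; exact sInf_le ⟨bot_le, hn⟩)
    have hm : P.HasMap (algebraMap T (T ⧸ n) a₀) := by
      constructor
      · rw [aeval_algebraMap_apply, coe_aeval_eq_eval]
        exact Ideal.Quotient.eq_zero_iff_mem.mpr (hJn h₁)
      · rw [aeval_algebraMap_apply, coe_aeval_eq_eval]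
        apply IsUnit.map
        change IsUnit ((f.derivative * h).eval a₀)
        rw [eval_mul, hha]
        exact hu.mul hu
    have : Nontrivial (T ⧸ n) := Ideal.Quotient.nontrivial_iff.mpr hn.ne_top
    refine ⟨T ⧸ n, inferInstance, this, (P.lift _ hm : P.Ring →+* T ⧸ n), fun x hx => ?_⟩
    change P.lift _ hm (algebraMap T P.Ring x) = 0
    rw [AlgHom.commutes]
    exact Ideal.Quotient.eq_zero_iff_mem.mpr hx
  obtain ⟨s⟩ := hs P.Ring hff inferInstance
  have hm := P.hasMap_X.map s
  refine ⟨s P.X, ?_, ?_⟩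
  · have := hm.1
    rwa [coe_aeval_eq_eval] at this
  · have h0 : f.eval (s P.X) = 0 := by
      have := hm.1
      rwa [coe_aeval_eq_eval] at this
    have h2 : IsUnit (h.eval (s P.X)) := by
      have := hm.2
      rw [coe_aeval_eq_eval] at this
      change IsUnit ((f.derivative * h).eval _) at this
      rw [eval_mul] at this
      exact isUnit_of_mul_isUnit_right this
    rw [hfh] at h0
    simp only [eval_add, eval_C, eval_mul, eval_sub, eval_X] at h0
    have h3 : (s P.X - a₀) * h.eval (s P.X) ∈ J := by
      have : (s P.X - a₀) * h.eval (s P.X) = - f.eval a₀ := by linear_combination h0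
      rw [this]; exact J.neg_mem h₁
    obtain ⟨v, hv⟩ := h2
    rw [← hv] at h3
    have := J.mul_mem_right (↑v⁻¹ : T) h3
    rwa [mul_assoc, Units.mul_inv, mul_one] at this

theorem exists_point {K B : Type u} [Field K] [IsAlgClosed K] [CommRing B] [Algebra K B]
    [Nontrivial B] [Algebra.FiniteType K B] : Nonempty (B →ₐ[K] K) := by
  obtain ⟨n, hn⟩ := Ideal.exists_maximal B
  let : Field (B ⧸ n) := Ideal.Quotient.field n
  have : Module.Finite K (B ⧸ n) := finite_of_finite_type_of_isJacobsonRing K (B ⧸ n)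
  exact ⟨(IsAlgClosed.lift (R := K) (S := B ⧸ n) (M := K)).comp (Ideal.Quotient.mkₐ K n)⟩

/-- étale covers acquire points in a product of algebraically closed fields -/
theorem exists_point_pi {κ : Type u} (K : κ → Type u) [∀ m, Field (K m)] [∀ m, IsAlgClosed (K m)]
    {T : Type u} [CommRing T] (Φ : T →+* ∀ m, K m)
    (S : Type u) [CommRing S] [Algebra T S] [Module.FaithfullyFlat T S] [Algebra.FiniteType T S] :
    ∃ σ : S →+* ∀ m, K m, σ.comp (algebraMap T S) = Φ := by
  have key : ∀ m, ∃ σ : S →+* K m, σ.comp (algebraMap T S) = (Pi.evalRingHom K m).comp Φ := by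
    intro m
    let : Algebra T (K m) := ((Pi.evalRingHom K m).comp Φ).toAlgebra
    obtain ⟨p⟩ := exists_point (K := K m) (B := K m ⊗[T] S)
    refine ⟨(p : K m ⊗[T] S →+* K m).comp
      (Algebra.TensorProduct.includeRight : S →ₐ[T] K m ⊗[T] S).toRingHom, ?_⟩
    ext x
    change p ((Algebra.TensorProduct.includeRight : S →ₐ[T] K m ⊗[T] S) (algebraMap T S x)) = _
    rw [AlgHom.commutes, Algebra.TensorProduct.algebraMap_apply, ]
    exact p.commutes _
  choose σ hσ using key
  refine ⟨RingHom.pi σ, ?_⟩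
  ext x m
  exact RingHom.congr_fun (hσ m) x

/-! ### Filtered colimits, elementwise -/

section Colim

variable {R T ι : Type u} [CommRing R] [CommRing T] [Algebra R T] [Preorder ι]
  [IsDirected ι (· ≤ ·)] {A : ι → Type u} [∀ i, CommRing (A i)]
  [∀ i, Algebra R (A i)]

theorem exists_lift_family
    (t : ∀ {i j : ι}, i ≤ j → (A i →ₐ[R] A j))
    (g : ∀ i, A i →ₐ[R] T)
    (g_comp : ∀ {i j : ι} (h : i ≤ j) (x : A i), g j (t h x) = g i x)
    (g_surj : ∀ x : T, ∃ (i : ι) (a : A i), g i a = x)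
    [Nonempty ι] {n : ℕ} (x : Fin n → T) : ∃ (i : ι) (a : Fin n → A i),
    ∀ k, g i (a k) = x k := by
  choose i a ha using fun k => g_surj (x k)
  obtain ⟨M, hM⟩ := (Set.finite_range i).bddAbove
  refine ⟨M, fun k => t (hM ⟨k, rfl⟩) (a k), fun k => ?_⟩
  rw [g_comp, ha]

theorem exists_kill
    (t : ∀ {i j : ι}, i ≤ j → (A i →ₐ[R] A j))
    (t_comp : ∀ {i j k : ι} (hij : i ≤ j) (hjk : j ≤ k) (x : A i),
      t hjk (t hij x) = t (hij.trans hjk) x)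
    (g : ∀ i, A i →ₐ[R] T)
    (g_eq : ∀ (i : ι) (x y : A i), g i x = g i y → ∃ (j : ι) (h : i ≤ j), t h x = t h y)
    {i : ι} (s : Finset (A i)) (hs : ∀ x ∈ s, g i x = 0) :
    ∃ (j : ι) (h : i ≤ j), ∀ x ∈ s, t h x = 0 := by
  classical
  induction s using Finset.induction_on with
  | empty => exact ⟨i, le_rfl, by simp⟩
  | insert a s ha ih =>
    obtain ⟨j, h, hj⟩ := ih fun x hx => hs x (Finset.mem_insert_of_mem hx)
    obtain ⟨k, hk, hak⟩ := g_eq i a 0 (by rw [hs a (Finset.mem_insert_self _ _), map_zero])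
    rw [map_zero] at hak
    obtain ⟨l, hjl, hkl⟩ := exists_ge_ge j k
    refine ⟨l, h.trans hjl, fun x hx => ?_⟩
    rcases Finset.mem_insert.mp hx with rfl | hx
    · rw [← t_comp hk hkl, hak, map_zero]
    · rw [← t_comp h hjl, hj x hx, map_zero]

theorem flat_colim
    (t : ∀ {i j : ι}, i ≤ j → (A i →ₐ[R] A j))
    (t_comp : ∀ {i j k : ι} (hij : i ≤ j) (hjk : j ≤ k) (x : A i),
      t hjk (t hij x) = t (hij.trans hjk) x)
    (g : ∀ i, A i →ₐ[R] T)
    (g_comp : ∀ {i j : ι} (h : i ≤ j) (x : A i), g j (t h x) = g i x)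
    (g_surj : ∀ x : T, ∃ (i : ι) (a : A i), g i a = x)
    (g_eq : ∀ (i : ι) (x y : A i), g i x = g i y → ∃ (j : ι) (h : i ≤ j), t h x = t h y)
    [Nonempty ι] [∀ i, Module.Flat R (A i)] : Module.Flat R T := by
  refine Module.Flat.of_forall_isTrivialRelation fun {l f x} h => ?_
  obtain ⟨i, a, ha⟩ := exists_lift_family t g g_comp g_surj x
  obtain ⟨j, hij, hj⟩ := exists_kill t t_comp g g_eq {∑ k, f k • a k} (by
    simp only [Finset.mem_singleton, forall_eq, map_sum, map_smul, ha, h])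
  have h0 : ∑ k, f k • t hij (a k) = 0 := by
    have := hj _ (Finset.mem_singleton_self _)
    simpa only [map_sum, map_smul] using this
  obtain ⟨m, c, y, h1, h2⟩ := Module.Flat.isTrivialRelation_of_sum_smul_eq_zero (R := R) (M := A j)
    (f := f) (x := fun k => t hij (a k)) h0
  refine ⟨m, c, fun k => g j (y k), fun k => ?_, h2⟩
  rw [← ha, ← g_comp hij, show t hij (a k) = _ from h1 k, map_sum]
  simp only [map_smul]

theorem exists_factor
    (t : ∀ {i j : ι}, i ≤ j → (A i →ₐ[R] A j))
    (t_comp : ∀ {i j k : ι} (hij : i ≤ j) (hjk : j ≤ k) (x : A i),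
      t hjk (t hij x) = t (hij.trans hjk) x)
    (g : ∀ i, A i →ₐ[R] T)
    (g_comp : ∀ {i j : ι} (h : i ≤ j) (x : A i), g j (t h x) = g i x)
    (g_surj : ∀ x : T, ∃ (i : ι) (a : A i), g i a = x)
    (g_eq : ∀ (i : ι) (x y : A i), g i x = g i y → ∃ (j : ι) (h : i ≤ j), t h x = t h y)
    [Nonempty ι] {D : Type u} [CommRing D] [Algebra.FinitePresentation ℤ D] (v : D →+* T) :
    ∃ (i : ι) (l : D →+* A i), (g i : A i →+* T).comp l = v := by
  obtain ⟨n, π, hπ, s, hs⟩ := (inferInstance : Algebra.FinitePresentation ℤ D).out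
  obtain ⟨i, a, ha⟩ := exists_lift_family t g g_comp g_surj (fun k => v (π (MvPolynomial.X k)))
  let ψ : MvPolynomial (Fin n) ℤ →+* A i := MvPolynomial.eval₂Hom (Int.castRingHom _) a
  have hψ : (g i : A i →+* T).comp ψ = v.comp (π : MvPolynomial (Fin n) ℤ →+* D) := by
    apply MvPolynomial.ringHom_ext
    · intro r; simp
    · intro k; simp [ψ, ha]
  classical
  obtain ⟨j, hij, hj⟩ := exists_kill t t_comp g g_eq (s.image ψ) (by
    intro x hx
    obtain ⟨r, hr, rfl⟩ := Finset.mem_image.mp hx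
    have h1 : g i (ψ r) = v (π r) := RingHom.congr_fun hψ r
    have h2 : r ∈ RingHom.ker π := by
      have : r ∈ Ideal.span (s : Set (MvPolynomial (Fin n) ℤ)) := Submodule.subset_span hr
      rw [hs] at this
      exact this
    rw [h1, (RingHom.mem_ker).mp h2, map_zero])
  let ψ' : MvPolynomial (Fin n) ℤ →+* A j := (t hij : A i →+* A j).comp ψ
  have hker : RingHom.ker (π : MvPolynomial (Fin n) ℤ →+* D) ≤ RingHom.ker ψ' := by
    have : RingHom.ker (π : MvPolynomial (Fin n) ℤ →+* D) = Ideal.span (s : Set _) := hs.symm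
    rw [this, Ideal.span_le]
    intro r hr
    exact hj _ (Finset.mem_image_of_mem ψ hr)
  refine ⟨j, RingHom.liftOfSurjective (π : MvPolynomial (Fin n) ℤ →+* D) hπ ⟨ψ', hker⟩, ?_⟩
  ext d
  obtain ⟨r, rfl⟩ := hπ d
  have h1 : RingHom.liftOfSurjective (π : MvPolynomial (Fin n) ℤ →+* D) hπ ⟨ψ', hker⟩ (π r)
      = ψ' r := RingHom.liftOfRightInverse_comp_apply _ _ _ _ r
  rw [RingHom.comp_apply, h1]
  change g j (t hij (ψ r)) = _
  rw [g_comp]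
  exact RingHom.congr_fun hψ r

end Colim

/-! ### The small filtered category of étale algebras over `R` with a map to `P` -/

/-- a presentation of a finite type `R`-algebra -/
structure Pre (R : Type u) [CommRing R] where
  n : ℕ
  J : Ideal (MvPolynomial (Fin n) R)

/-- the underlying algebra -/
def Pre.A {R : Type u} [CommRing R] (o : Pre R) : Type u := MvPolynomial (Fin o.n) R ⧸ o.J

noncomputable instance {R : Type u} [CommRing R] (o : Pre R) : CommRing o.A :=
  inferInstanceAs (CommRing (MvPolynomial (Fin o.n) R ⧸ o.J))

noncomputable instance {R : Type u} [CommRing R] (o : Pre R) : Algebra R o.A :=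
  inferInstanceAs (Algebra R (MvPolynomial (Fin o.n) R ⧸ o.J))

/-- an étale `R`-algebra (with a chosen presentation) and a map to `P` -/
structure Obj (R P : Type u) [CommRing R] [CommRing P] [Algebra R P] extends Pre R where
  et : Algebra.Etale R toPre.A
  φ : toPre.A →ₐ[R] P

section Cat

variable {R P : Type u} [CommRing R] [CommRing P] [Algebra R P]

instance (o : Obj R P) : Algebra.Etale R o.A := o.et

noncomputable instance : SmallCategory (Obj R P) where
  Hom o o' := {f : o.A →ₐ[R] o'.A // o'.φ.comp f = o.φ}
  id o := ⟨AlgHom.id R _, rfl⟩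
  comp f g := ⟨g.1.comp f.1, by rw [← AlgHom.comp_assoc, g.2, f.2]⟩

theorem exists_model (C : Type u) [CommRing C] [Algebra R C] [Algebra.Etale R C]
    (ψ : C →ₐ[R] P) : ∃ (o : Obj R P) (e : C ≃ₐ[R] o.A), o.φ.comp (e : C →ₐ[R] o.A) = ψ := by
  obtain ⟨n, π, hπ, -⟩ := (inferInstance : Algebra.FinitePresentation R C).out
  let e := Ideal.quotientKerAlgEquivOfSurjective hπ
  let p : Pre R := ⟨n, RingHom.ker π⟩
  let e' : C ≃ₐ[R] p.A := e.symm
  refine ⟨⟨p, Algebra.Etale.of_equiv e', ψ.comp (e'.symm : p.A →ₐ[R] C)⟩, e', ?_⟩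
  ext x
  simp

theorem exists_pushout (o o' : Obj R P) : ∃ (z : Obj R P) (_ : o ⟶ z) (_ : o' ⟶ z), True := by
  have : Algebra.Etale R (o.A ⊗[R] o'.A) := Algebra.Etale.comp R o.A _
  obtain ⟨z, e, he⟩ := exists_model (o.A ⊗[R] o'.A) (Algebra.TensorProduct.productMap o.φ o'.φ)
  refine ⟨z, ⟨(e : o.A ⊗[R] o'.A →ₐ[R] z.A).comp Algebra.TensorProduct.includeLeft, ?_⟩,
    ⟨(e : o.A ⊗[R] o'.A →ₐ[R] z.A).comp Algebra.TensorProduct.includeRight, ?_⟩, trivial⟩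
  · rw [← AlgHom.comp_assoc, he, Algebra.TensorProduct.productMap_left]
  · rw [← AlgHom.comp_assoc, he, Algebra.TensorProduct.productMap_right]

/-- coequalizers of étale algebras -/
theorem exists_coeq_aux {A B : Type u} [CommRing A] [CommRing B] [Algebra R A] [Algebra R B]
    [Algebra.Etale R A] [Algebra.Etale R B] (f g : A →ₐ[R] B) (φ : A →ₐ[R] P) (ψ : B →ₐ[R] P)
    (hf : ψ.comp f = φ) (hg : ψ.comp g = φ) :
    ∃ (C : Type u) (_ : CommRing C) (_ : Algebra R C) (_ : Algebra.Etale R C)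
      (q : B →ₐ[R] C) (χ : C →ₐ[R] P), χ.comp q = ψ ∧ q.comp f = q.comp g := by
  let D := A ⊗[R] A
  have : Algebra.Etale R D := Algebra.Etale.comp R A _
  let a : D →ₐ[R] A := Algebra.TensorProduct.lmul' R
  let b : D →ₐ[R] B := Algebra.TensorProduct.productMap f g
  have hab : ψ.comp b = φ.comp a := by
    apply Algebra.TensorProduct.ext
    · ext x
      simpa [a, b] using DFunLike.congr_fun hf x
    · ext x
      simpa [a, b] using DFunLike.congr_fun hg x
  have e1 : ∀ x, b (x ⊗ₜ 1) = f x := fun x =>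
    show Algebra.TensorProduct.productMap f g (x ⊗ₜ[R] (1 : A)) = f x by simp
  have e2 : ∀ x, b (1 ⊗ₜ x) = g x := fun x =>
    show Algebra.TensorProduct.productMap f g ((1 : A) ⊗ₜ[R] x) = g x by simp
  have e3 : ∀ x, a (x ⊗ₜ 1) = x := fun x =>
    show Algebra.TensorProduct.lmul' R (x ⊗ₜ[R] (1 : A)) = x by simp
  have e4 : ∀ x, a (1 ⊗ₜ x) = x := fun x =>
    show Algebra.TensorProduct.lmul' R ((1 : A) ⊗ₜ[R] x) = x by simp
  let : Algebra D A := a.toRingHom.toAlgebra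
  let : Algebra D B := b.toRingHom.toAlgebra
  let : Algebra D P := (ψ.comp b).toRingHom.toAlgebra
  have : IsScalarTower R D A := IsScalarTower.of_algebraMap_eq fun r => (a.commutes r).symm
  have : IsScalarTower R D B := IsScalarTower.of_algebraMap_eq fun r => (b.commutes r).symm
  have : IsScalarTower R D P := IsScalarTower.of_algebraMap_eq fun r => ((ψ.comp b).commutes r).symm
  have : Algebra.Etale D A := Algebra.Etale.of_restrictScalars R D A
  have : Algebra.Etale R (B ⊗[D] A) := Algebra.Etale.comp R B _
  let ψ' : B →ₐ[D] P := { ψ with commutes' := fun d => rfl }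
  let φ' : A →ₐ[D] P := { φ with commutes' := fun d => (DFunLike.congr_fun hab d).symm }
  let χ : B ⊗[D] A →ₐ[D] P := Algebra.TensorProduct.productMap ψ' φ'
  refine ⟨B ⊗[D] A, inferInstance, inferInstance, inferInstance,
    (Algebra.TensorProduct.includeLeft : B →ₐ[R] B ⊗[D] A), χ.restrictScalars R, ?_, ?_⟩
  · ext x
    change χ (x ⊗ₜ 1) = ψ x
    rw [Algebra.TensorProduct.productMap_left_apply]
    rfl
  · ext x
    change (f x) ⊗ₜ[D] (1 : A) = (g x) ⊗ₜ[D] (1 : A)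
    have key : ∀ d : D, (b d) ⊗ₜ[D] (1 : A) = (1 : B) ⊗ₜ[D] (a d) := fun d => by
      have h1 : b d = d • (1 : B) := by rw [Algebra.smul_def, mul_one]; rfl
      have h2 : a d = d • (1 : A) := by rw [Algebra.smul_def, mul_one]; rfl
      rw [h1, h2, TensorProduct.smul_tmul]
    have k1 := key (x ⊗ₜ 1)
    have k2 := key (1 ⊗ₜ x)
    have e1 := e1 x
    have e2 := e2 x
    have e3 := e3 x
    have e4 := e4 x
    rw [e1, e3] at k1
    rw [e2, e4] at k2
    rw [k1, k2]

instance : IsFiltered (Obj R P) where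
  cocone_objs := exists_pushout
  cocone_maps := by
    intro o o' f g
    obtain ⟨C, _, _, _, q, χ, h1, h2⟩ := exists_coeq_aux f.1 g.1 o.φ o'.φ f.2 g.2
    obtain ⟨z, e, he⟩ := exists_model C χ
    refine ⟨z, ⟨(e : C →ₐ[R] z.A).comp q, by rw [← AlgHom.comp_assoc, he, h1]⟩, ?_⟩
    apply Subtype.ext
    change ((e : C →ₐ[R] z.A).comp q).comp f.1 = ((e : C →ₐ[R] z.A).comp q).comp g.1
    rw [AlgHom.comp_assoc, h2, AlgHom.comp_assoc]
  nonempty := by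
    obtain ⟨o, -⟩ := exists_model R (Algebra.ofId R P)
    exact ⟨o⟩

end Cat

/-- A directed system of étale `R`-algebras with compatible maps to `P`, cofinal among all
étale `R`-algebras mapping to `P`. -/
structure EtSys (R P : Type u) [CommRing R] [CommRing P] [Algebra R P] where
  ι : Type u
  [preorder : Preorder ι]
  directed : IsDirected ι (· ≤ ·)
  ne : Nonempty ι
  A : ι → Type u
  [commRingA : ∀ i, CommRing (A i)]
  [algA : ∀ i, Algebra R (A i)]
  et : ∀ i, Algebra.Etale R (A i)
  t : ∀ {i j : ι}, i ≤ j → (A i →ₐ[R] A j)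
  t_id : ∀ (i : ι) (x : A i), t (le_refl i) x = x
  t_comp : ∀ {i j k : ι} (hij : i ≤ j) (hjk : j ≤ k) (x : A i),
    t hjk (t hij x) = t (hij.trans hjk) x
  φ : ∀ i, A i →ₐ[R] P
  φ_comp : ∀ {i j : ι} (h : i ≤ j), (φ j).comp (t h) = φ i
  ext : ∀ (i : ι) (C : Type u) [CommRing C] [Algebra (A i) C] [Algebra.Etale (A i) C]
    (ψ : C →+* P), ψ.comp (algebraMap (A i) C) = (φ i : A i →+* P) →
    ∃ (j : ι) (h : i ≤ j) (s : C →+* A j), s.comp (algebraMap (A i) C) = (t h : A i →+* A j)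

theorem exists_etSys (R P : Type u) [CommRing R] [CommRing P] [Algebra R P] :
    Nonempty (EtSys R P) := by
  obtain ⟨α, _, _, _, F, hF⟩ := IsFiltered.exists_directed (Obj R P)
  rw [Functor.final_iff_of_isFiltered] at hF
  obtain ⟨hF1, hF2⟩ := hF
  refine ⟨{
    ι := α
    directed := inferInstance
    ne := inferInstance
    A := fun i => (F.obj i).A
    et := fun i => inferInstance
    t := fun h => (F.map (homOfLE h)).1
    t_id := fun i x => ?_
    t_comp := fun {i j k} hij hjk x => ?_
    φ := fun i => (F.obj i).φ
    φ_comp := fun h => (F.map (homOfLE h)).2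
    ext := ?_ }⟩
  · have : F.map (homOfLE (le_refl i)) = 𝟙 _ := F.map_id i
    rw [this]; rfl
  · have : F.map (homOfLE (hij.trans hjk)) = F.map (homOfLE hij) ≫ F.map (homOfLE hjk) := by
      rw [← F.map_comp]; rfl
    rw [this]; rfl
  · intro i C _ _ _ ψ hψ
    let : Algebra R C := ((algebraMap (F.obj i).A C).comp (algebraMap R (F.obj i).A)).toAlgebra
    have : IsScalarTower R (F.obj i).A C := IsScalarTower.of_algebraMap_eq fun r => rfl
    have : Algebra.Etale R C := Algebra.Etale.comp R (F.obj i).A C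
    let ψ' : C →ₐ[R] P := { ψ with
      commutes' := fun r => by
        have := RingHom.congr_fun hψ (algebraMap R (F.obj i).A r)
        refine this.trans ((F.obj i).φ.commutes r) }
    obtain ⟨o, e, he⟩ := exists_model C ψ'
    obtain ⟨b, ⟨u⟩⟩ := hF1 o
    obtain ⟨c, hic, hbc⟩ := exists_ge_ge i b
    let w : F.obj i ⟶ o := ⟨(e : C →ₐ[R] o.A).comp (IsScalarTower.toAlgHom R (F.obj i).A C), by
      rw [← AlgHom.comp_assoc, he]
      ext1 x
      exact RingHom.congr_fun hψ x⟩
    obtain ⟨d, hcd, hd⟩ := hF2 (F.map (homOfLE hic)) (w ≫ u ≫ F.map (homOfLE hbc))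
    refine ⟨d, hic.trans hcd.le,
      (((u ≫ F.map (homOfLE hbc)) ≫ F.map hcd).1.comp (e : C →ₐ[R] o.A) : C →+* _), ?_⟩
    have h1 : F.map (homOfLE (hic.trans hcd.le)) = F.map (homOfLE hic) ≫ F.map hcd := by
      rw [← F.map_comp]; rfl
    rw [h1, hd]
    rfl

/-! ### The colimit -/

/-- The colimit of the system, with its map to `P`. -/
structure EtLim (R P : Type u) [CommRing R] [CommRing P] [Algebra R P] extends EtSys R P where
  T : Type u
  [commRingT : CommRing T]
  [algT : Algebra R T]
  g : ∀ i, A i →ₐ[R] T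
  g_comp : ∀ {i j : ι} (h : i ≤ j) (x : A i), g j (t h x) = g i x
  g_surj : ∀ x : T, ∃ (i : ι) (a : A i), g i a = x
  g_eq : ∀ (i : ι) (x y : A i), g i x = g i y → ∃ (j : ι) (h : i ≤ j), t h x = t h y
  Φ : T →ₐ[R] P
  Φ_g : ∀ i (x : A i), Φ (g i x) = φ i x

theorem exists_etLim (R P : Type u) [CommRing R] [CommRing P] [Algebra R P] :
    Nonempty (EtLim R P) := by
  obtain ⟨E⟩ := exists_etSys R P
  let _ := E.preorder
  let _ := E.commRingA
  let _ := E.algA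
  have : IsDirectedOrder E.ι := E.directed
  have := E.ne
  have : DirectedSystem E.A (fun i j (h : i ≤ j) => (E.t h : E.A i → E.A j)) :=
    ⟨fun i x => E.t_id i x, fun k j i hij hjk x => E.t_comp hij hjk x⟩
  let f : ∀ i j (h : i ≤ j), E.A i →ₐ[R] E.A j := fun _ _ h => E.t h
  refine ⟨{
    E with
    T := DirectLimit E.A f
    g := fun i => DirectLimit.Algebra.of E.A f i
    g_comp := fun {i j} h x => ?_
    g_surj := fun x => ?_
    g_eq := fun i x y h => ?_
    Φ := DirectLimit.Algebra.lift E.A f P E.φ (fun i j h x => DFunLike.congr_fun (E.φ_comp h) x)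
    Φ_g := fun i x => rfl }⟩
  · exact DirectLimit.Algebra.of_f (f := f) h x
  · induction x using DirectLimit.induction with
    | _ i x => exact ⟨i, x, rfl⟩
  · obtain ⟨j, h1, h2, h3⟩ := Quotient.exact h
    exact ⟨j, h1, h3⟩

section Main

variable {R P : Type u} [CommRing R] [CommRing P] [Algebra R P] (E : EtLim R P)

noncomputable instance : CommRing E.T := E.commRingT
noncomputable instance : Algebra R E.T := E.algT
instance : Preorder E.ι := E.preorder
instance : IsDirected E.ι (· ≤ ·) := E.directed
instance : Nonempty E.ι := E.ne
noncomputable instance (i : E.ι) : CommRing (E.A i) := E.commRingA i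
noncomputable instance (i : E.ι) : Algebra R (E.A i) := E.algA i
instance (i : E.ι) : Algebra.Etale R (E.A i) := E.et i

theorem flat_T : Module.Flat R E.T :=
  flat_colim E.t E.t_comp E.g E.g_comp E.g_surj E.g_eq

theorem isUnit_of_isUnit (x : E.T) (hx : IsUnit (E.Φ x)) : IsUnit x := by
  obtain ⟨i, a, rfl⟩ := E.g_surj x
  rw [E.Φ_g] at hx
  have : Algebra.Etale (E.A i) (Localization.Away a) := Algebra.Etale.of_isLocalizationAway a
  obtain ⟨j, h, s, hs⟩ := E.ext i (Localization.Away a)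
    (IsLocalization.Away.lift (S := Localization.Away a) (g := (E.φ i : E.A i →+* P)) a hx)
    (IsLocalization.Away.lift_comp a hx)
  have h1 : s (algebraMap _ _ a) = E.t h a := RingHom.congr_fun hs a
  have h2 : IsUnit (E.t h a) := by
    rw [← h1]
    exact (IsLocalization.Away.algebraMap_isUnit a).map s
  rw [← E.g_comp h]
  exact h2.map (E.g j)

theorem le_jacobson (J : Ideal E.T) (hJ : ∀ x ∈ J, E.Φ x = 0) : J ≤ Ideal.jacobson ⊥ := by
  intro x hx
  rw [Ideal.mem_jacobson_bot]
  intro y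
  apply isUnit_of_isUnit
  rw [map_add, map_mul, hJ x hx]
  simp

theorem splits_T (S : Type u) [CommRing S] [Algebra E.T S] [Algebra.Etale E.T S]
    (σ : S →+* P) (hσ : σ.comp (algebraMap E.T S) = (E.Φ : E.T →+* P)) :
    Nonempty (S →ₐ[E.T] E.T) := by
  obtain ⟨A₀, B₀, _, _, hfg, hB, ⟨e⟩⟩ :=
    Algebra.Etale.exists_subalgebra_fg (R := ℤ) (A := E.T) (B := S)
  have : Algebra.FiniteType ℤ A₀ := A₀.fg_iff_finiteType.mp hfg
  have : Algebra.FinitePresentation ℤ A₀ := Algebra.FinitePresentation.of_finiteType.mp this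
  obtain ⟨i, l, hl⟩ := exists_factor E.t E.t_comp E.g E.g_comp E.g_surj E.g_eq
    (algebraMap A₀ E.T)
  let _ : Algebra A₀ (E.A i) := l.toAlgebra
  let C := E.A i ⊗[A₀] B₀
  let _ : Algebra A₀ P := ((E.φ i : E.A i →+* P).comp l).toAlgebra
  let p1 : E.A i →ₐ[A₀] P := { (E.φ i : E.A i →+* P) with commutes' := fun r => rfl }
  let p2 : B₀ →ₐ[A₀] P :=
    { σ.comp ((e.symm : E.T ⊗[A₀] B₀ →+* S).comp
        (Algebra.TensorProduct.includeRight : B₀ →ₐ[A₀] E.T ⊗[A₀] B₀).toRingHom) with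
      commutes' := fun r => by
        change σ (e.symm ((Algebra.TensorProduct.includeRight : B₀ →ₐ[A₀] E.T ⊗[A₀] B₀)
          (algebraMap A₀ B₀ r))) = E.φ i (l r)
        rw [AlgHom.commutes]
        change σ (e.symm (algebraMap E.T (E.T ⊗[A₀] B₀) (algebraMap A₀ E.T r))) = _
        rw [e.symm.commutes]
        refine (RingHom.congr_fun hσ _).trans ?_
        rw [← hl]
        exact E.Φ_g i (l r) }
  let ψ : C →ₐ[A₀] P := Algebra.TensorProduct.productMap p1 p2
  obtain ⟨j, h, s, hs⟩ := E.ext i C (ψ : C →+* P) (by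
    ext x
    change ψ (x ⊗ₜ 1) = _
    rw [Algebra.TensorProduct.productMap_left_apply]
    rfl)
  let q : B₀ →ₐ[A₀] E.T :=
    { ((E.g j : E.A j →+* E.T).comp s).comp
        (Algebra.TensorProduct.includeRight : B₀ →ₐ[A₀] C).toRingHom with
      commutes' := fun r => by
        change E.g j (s ((Algebra.TensorProduct.includeRight : B₀ →ₐ[A₀] C)
          (algebraMap A₀ B₀ r))) = _
        rw [AlgHom.commutes]
        have h1 : s (algebraMap (E.A i) C (l r)) = E.t h (l r) := RingHom.congr_fun hs (l r)
        change E.g j (s (algebraMap (E.A i) C (l r))) = _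
        rw [h1, E.g_comp]
        exact RingHom.congr_fun hl r }
  exact ⟨(Algebra.TensorProduct.lift (AlgHom.id E.T E.T) q (fun _ _ => Commute.all _ _)).comp
    (e : S →ₐ[E.T] E.T ⊗[A₀] B₀)⟩

end Main

end IndEtaleAux


/-- For any commutative ring `R` and ideal `I` contained in every maximal ideal of `R`,
there is a faithfully flat, ind-étale `R`-algebra `R̃` that is Henselian along `I·R̃` and has
no nonsplit étale covers. -/
theorem exists_ind_etale_splitting_algebra (R : Type u) [CommRing R] (I : Ideal R)
    (hI : ∀ m : Ideal R, m.IsMaximal → I ≤ m) :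
    Nonempty (IndEtaleSplittingAlgebra R I) := by
  let K : MaximalSpectrum R → Type u := fun m => AlgebraicClosure m.asIdeal.ResidueField
  have hK : ∀ (m : MaximalSpectrum R) (x : R), x ∈ m.asIdeal → algebraMap R (K m) x = 0 := by
    intro m x hx
    rw [IsScalarTower.algebraMap_apply R m.asIdeal.ResidueField (K m)]
    rw [← Ideal.ker_algebraMap_residueField m.asIdeal, RingHom.mem_ker] at hx
    rw [hx, map_zero]
  obtain ⟨E⟩ := IndEtaleAux.exists_etLim R (∀ m, K m)
  have hflat := IndEtaleAux.flat_T E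
  have hsplits : ∀ (S : Type u) [CommRing S] [Algebra E.T S],
      Module.FaithfullyFlat E.T S → Algebra.Etale E.T S → Nonempty (S →ₐ[E.T] E.T) := by
    intro S _ _ _ _
    obtain ⟨σ, hσ⟩ := IndEtaleAux.exists_point_pi K (E.Φ : E.T →+* ∀ m, K m) S
    exact IndEtaleAux.splits_T E S σ hσ
  have hjac : I.map (algebraMap R E.T) ≤ Ideal.jacobson ⊥ := by
    apply IndEtaleAux.le_jacobson
    have : I.map (algebraMap R E.T) ≤ RingHom.ker (E.Φ : E.T →+* ∀ m, K m) := by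
      rw [Ideal.map_le_iff_le_comap]
      intro x hx
      change E.Φ (algebraMap R E.T x) = 0
      rw [AlgHom.commutes]
      funext m
      exact hK m x (hI _ m.isMaximal hx)
    exact fun x hx => this hx
  exact ⟨{
    At := E.T
    faithfullyFlat := IndEtaleAux.faithfullyFlat_of_maps fun n hn =>
      ⟨K ⟨n, hn⟩, inferInstance, inferInstance,
        (Pi.evalRingHom K ⟨n, hn⟩).comp (E.Φ : E.T →+* ∀ m, K m), fun x hx => by
          change E.Φ (algebraMap R E.T x) ⟨n, hn⟩ = 0
          rw [AlgHom.commutes]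
          exact hK ⟨n, hn⟩ x hx⟩
    ι := E.ι
    directed := E.directed
    nonempty_ι := E.ne
    A := E.A
    etaleA := E.et
    t := E.t
    t_id := E.t_id
    t_comp := E.t_comp
    g := E.g
    g_comp := E.g_comp
    g_jointly_surjective := E.g_surj
    g_eq_eventually := E.g_eq
    henselian := IndEtaleAux.henselian_of_splits _ hjac hsplits
    splits := hsplits }⟩
end

section
/- Let f : A → A' be a homomorphism of commutative rings and a ∈ A an element such that the induced map A/aA → A'/f(a)A' is bijective and f restricts to a bijection from the a-torsion of A onto the f(a)-torsion of A'. Then the sequence of abelian groups 0 → A → A' ⊕ A[1/a] → A'[1/f(a)] → 0 is exact, where the first map sends x to (f(x), x/1) and the second map sends (y, z) to y/1 − (image of z under the localized map A[1/a] → A'[1/f(a)] induced by f). In particular, A is the fiber product A' ×_{A'[1/f(a)]} A[1/a], and the difference map A' ⊕ A[1/a] → A'[1/f(a)] is surjective. (This is the 0-truncated case of the paper's derived Beauville–Laszlo lemma.) -/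
universe u

/-- The span of `{a}` is contained in the preimage of the span of `{f a}`. -/
theorem span_singleton_le_comap_span_singleton_image
    {A A' : Type u} [CommRing A] [CommRing A'] (f : A →+* A') (a : A) :
    Ideal.span {a} ≤ (Ideal.span {f a}).comap f := by
  rw [Ideal.span_le]
  rintro x hx
  rw [Set.mem_singleton_iff] at hx
  subst hx
  exact Ideal.mem_comap.mpr (Ideal.subset_span (Set.mem_singleton _))

/-- Beauville–Laszlo glueing (0-truncated case): if `f : A → A'` induces a bijection
`A/aA ≅ A'/f(a)A'` and a bijection on `a`-torsion, then
`0 → A → A' ⊕ A[1/a] → A'[1/f(a)] → 0` is exact; in particular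
`A ≅ A' ×_{A'[1/f(a)]} A[1/a]`, and the difference map is surjective. -/
theorem beauville_laszlo_exact_sequence
    {A A' : Type u} [CommRing A] [CommRing A'] (f : A →+* A') (a : A)
    (hquot : Function.Bijective
      (Ideal.quotientMap (I := Ideal.span {a}) (Ideal.span {f a}) f
        (span_singleton_le_comap_span_singleton_image f a)))
    (htors : Function.Bijective (fun x : {x : A // a * x = 0} =>
      (⟨f x.1, by rw [← map_mul, x.2, map_zero]⟩ : {y : A' // f a * y = 0}))) :
    Function.Injective (fun x : A =>
      ((f x, algebraMap A (Localization.Away a) x) : A' × Localization.Away a)) ∧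
    (∀ (y : A') (z : Localization.Away a),
      algebraMap A' (Localization.Away (f a)) y =
        IsLocalization.Away.map (Localization.Away a) (Localization.Away (f a)) f a z ↔
      ∃ x : A, f x = y ∧ algebraMap A (Localization.Away a) x = z) ∧
    Function.Surjective (fun yz : A' × Localization.Away a =>
      algebraMap A' (Localization.Away (f a)) yz.1 -
        IsLocalization.Away.map (Localization.Away a) (Localization.Away (f a)) f a yz.2) := by
  have Q1 : ∀ y : A', ∃ x w, y = f x + f a * w := by
    intro y
    obtain ⟨q, hq⟩ := hquot.2 (Ideal.Quotient.mk _ y)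
    obtain ⟨x, rfl⟩ := Ideal.Quotient.mk_surjective q
    rw [Ideal.quotientMap_mk, eq_comm, Ideal.Quotient.eq, Ideal.mem_span_singleton] at hq
    obtain ⟨w, hw⟩ := hq
    exact ⟨x, w, by rw [← hw]; ring⟩
  have Q2 : ∀ (x : A) (w : A'), f x = f a * w → ∃ x', x = a * x' := by
    intro x w h
    have h0 : Ideal.Quotient.mk (Ideal.span {a}) x = 0 := by
      apply hquot.1
      rw [Ideal.quotientMap_mk, map_zero, Ideal.Quotient.eq_zero_iff_mem,
        Ideal.mem_span_singleton]
      exact ⟨w, h⟩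
    rw [Ideal.Quotient.eq_zero_iff_mem, Ideal.mem_span_singleton] at h0
    exact h0
  have T1 : ∀ x : A, a * x = 0 → f x = 0 → x = 0 := by
    intro x h1 h2
    have := @htors.1 ⟨x, h1⟩ ⟨0, mul_zero a⟩ (Subtype.ext (by simpa using h2))
    exact congrArg Subtype.val this
  have T2 : ∀ y : A', f a * y = 0 → ∃ x, a * x = 0 ∧ f x = y := by
    intro y h
    obtain ⟨x, hx⟩ := htors.2 ⟨y, h⟩
    exact ⟨x.1, x.2, congrArg Subtype.val hx⟩
  have T1n : ∀ (n : ℕ) (x : A), a ^ n * x = 0 → f x = 0 → x = 0 := by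
    intro n
    induction n with
    | zero => intro x h _; simpa using h
    | succ n ih =>
      intro x h h2
      refine ih x (T1 _ ?_ ?_) h2
      · rw [← h]; ring
      · rw [map_mul, h2, mul_zero]
  have T2n : ∀ (n : ℕ) (y : A'), f a ^ n * y = 0 → ∃ x, a ^ n * x = 0 ∧ f x = y := by
    intro n
    induction n with
    | zero => intro y h; exact ⟨0, by simp, by simpa using h.symm⟩
    | succ n ih =>
      intro y h
      obtain ⟨x, hx, hxy⟩ := ih (f a * y) (by rw [← h]; ring)
      obtain ⟨x', rfl⟩ := Q2 x y hxy
      obtain ⟨t, ht, hty⟩ := T2 (y - f x') (by rw [mul_sub, ← hxy, map_mul, sub_self])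
      refine ⟨t + x', ?_, by rw [map_add, hty]; ring⟩
      linear_combination hx + a ^ n * ht
  have Q1n : ∀ (n : ℕ) (y : A'), ∃ x w, y = f x + f a ^ n * w := by
    intro n
    induction n with
    | zero => intro y; exact ⟨0, y, by simp⟩
    | succ n ih =>
      intro y
      obtain ⟨x, w, h⟩ := ih y
      obtain ⟨x', w', h'⟩ := Q1 w
      refine ⟨x + a ^ n * x', w', ?_⟩
      rw [h, h', map_add, map_mul, map_pow]; ring
  have Q2n : ∀ (n : ℕ) (x : A) (w : A'), f x = f a ^ n * w → ∃ x', x = a ^ n * x' := by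
    intro n
    induction n with
    | zero => intro x w _; exact ⟨x, by simp⟩
    | succ n ih =>
      intro x w h
      obtain ⟨x1, rfl⟩ := Q2 x (f a ^ n * w) (by rw [h]; ring)
      rw [map_mul] at h
      obtain ⟨t, ht, hty⟩ := T2 (f x1 - f a ^ n * w) (by linear_combination h)
      obtain ⟨x', hx'⟩ := ih (x1 - t) w (by rw [map_sub, hty]; ring)
      exact ⟨x', by linear_combination a * hx' + ht⟩
  have hmap : ∀ x : A, IsLocalization.Away.map (Localization.Away a) (Localization.Away (f a)) f a
      (algebraMap A _ x) = algebraMap A' _ (f x) := fun x => by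
    simp [IsLocalization.Away.map, IsLocalization.map_eq]
  have hu : IsUnit (algebraMap A (Localization.Away a) a) :=
    IsLocalization.Away.algebraMap_isUnit a
  have hu' : IsUnit (algebraMap A' (Localization.Away (f a)) (f a)) :=
    IsLocalization.Away.algebraMap_isUnit (f a)
  refine ⟨?_, ?_, ?_⟩
  · intro x x' h
    obtain ⟨h1, h2⟩ := Prod.mk.inj h
    obtain ⟨⟨_, n, rfl⟩, hn⟩ := IsLocalization.exists_of_eq (M := Submonoid.powers a) h2
    refine sub_eq_zero.1 (T1n n _ ?_ ?_)
    · rw [mul_sub]; exact sub_eq_zero.2 hn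
    · rw [map_sub, h1, sub_self]
  · intro y z
    constructor
    · intro h
      obtain ⟨n, x, hz⟩ := IsLocalization.Away.surj a z
      have h2 : algebraMap A' (Localization.Away (f a)) (f a ^ n * y)
          = algebraMap A' (Localization.Away (f a)) (f x) := by
        rw [← hmap x, ← hz, map_mul, map_pow, map_mul, map_pow, hmap, ← h, mul_comm]
      obtain ⟨⟨_, m, rfl⟩, hm⟩ := IsLocalization.exists_of_eq (M := Submonoid.powers (f a)) h2
      obtain ⟨t, ht, hty⟩ := T2n m (f a ^ n * y - f x) (by
        rw [mul_sub]; exact sub_eq_zero.2 hm)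
      have hxt : f (x + t) = f a ^ n * y := by rw [map_add, hty]; ring
      obtain ⟨x', hx'⟩ := Q2n n _ _ hxt
      obtain ⟨s, hs, hsy⟩ := T2n n (y - f x') (by
        rw [mul_sub, ← hxt, hx', map_mul, map_pow, sub_self])
      refine ⟨x' + s, by rw [map_add, hsy]; ring, ?_⟩
      have ht0 : algebraMap A (Localization.Away a) t = 0 := by
        apply (hu.pow m).mul_left_cancel
        rw [← map_pow, ← map_mul, ht, map_zero, mul_zero]
      apply (hu.pow n).mul_left_cancel
      rw [mul_comm _ z, hz, ← map_pow, ← map_mul, mul_add, hs, add_zero, ← hx', map_add, ht0,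
        add_zero]
    · rintro ⟨x, rfl, rfl⟩
      exact (hmap x).symm
  · intro u
    obtain ⟨n, y, hy⟩ := IsLocalization.Away.surj (f a) u
    obtain ⟨x, w, rfl⟩ := Q1n n y
    obtain ⟨v, hv⟩ := (hu.pow n).exists_right_inv
    refine ⟨(w, -(algebraMap A _ x * v)), ?_⟩
    have hv' := congrArg
      (IsLocalization.Away.map (Localization.Away a) (Localization.Away (f a)) f a) hv
    rw [map_mul, map_pow, hmap, map_one] at hv'
    apply (hu'.pow n).mul_left_cancel
    simp only [map_neg, map_mul, hmap]
    rw [map_add, map_mul, map_pow] at hy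
    linear_combination algebraMap A' (Localization.Away (f a)) (f x) * hv' - hy
end

section
/- Let f : A → A' be a homomorphism of commutative rings and a ∈ A an element such that the induced map A/aA → A'/f(a)A' is bijective and f restricts to a bijection from the a-torsion of A onto the f(a)-torsion of A'. Then for every n ≥ 1 the induced map A/aⁿA → A'/f(a)ⁿA' is bijective and f restricts to a bijection from the aⁿ-torsion of A onto the f(a)ⁿ-torsion of A'. (This says: an isomorphism on derived quotients A/^L a ≅ A'/^L a implies one on A/^L aⁿ ≅ A'/^L aⁿ for all n.) -/
universe u

/-- The span of `{aⁿ}` is contained in the preimage under `f` of the span of `{f(a)ⁿ}`. -/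
theorem span_pow_le_comap_span_pow_image
    {A A' : Type u} [CommRing A] [CommRing A'] (f : A →+* A') (a : A) (n : ℕ) :
    Ideal.span {a ^ n} ≤ (Ideal.span {f a ^ n}).comap f := by
  rw [Ideal.span_le]
  rintro x hx
  rw [Set.mem_singleton_iff] at hx
  subst hx
  rw [SetLike.mem_coe, Ideal.mem_comap, map_pow]
  exact Ideal.subset_span (Set.mem_singleton _)

theorem aux_quot_iff {A A' : Type u} [CommRing A] [CommRing A'] (f : A →+* A') (a : A) (n : ℕ) :
    Function.Bijective
      (Ideal.quotientMap (I := Ideal.span {a ^ n}) (Ideal.span {f a ^ n}) f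
        (span_pow_le_comap_span_pow_image f a n)) ↔
    (∀ x z, f x = f a ^ n * z → ∃ t, x = a ^ n * t) ∧
      (∀ y, ∃ x z, y = f x + f a ^ n * z) := by
  unfold Function.Bijective
  refine and_congr ?_ ?_
  · rw [injective_iff_map_eq_zero]
    constructor
    · intro h x z hx
      have := h (Ideal.Quotient.mk _ x) (by
        rw [Ideal.quotientMap_mk, Ideal.Quotient.eq_zero_iff_mem, Ideal.mem_span_singleton]
        exact ⟨z, hx⟩)
      rw [Ideal.Quotient.eq_zero_iff_mem, Ideal.mem_span_singleton] at this
      exact this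
    · intro h q hq
      obtain ⟨x, rfl⟩ := Ideal.Quotient.mk_surjective q
      rw [Ideal.quotientMap_mk, Ideal.Quotient.eq_zero_iff_mem, Ideal.mem_span_singleton] at hq
      obtain ⟨z, hz⟩ := hq
      rw [Ideal.Quotient.eq_zero_iff_mem, Ideal.mem_span_singleton]
      exact h x z hz
  · constructor
    · intro h y
      obtain ⟨q, hq⟩ := h (Ideal.Quotient.mk _ y)
      obtain ⟨x, rfl⟩ := Ideal.Quotient.mk_surjective q
      rw [Ideal.quotientMap_mk, eq_comm, Ideal.Quotient.eq, Ideal.mem_span_singleton] at hq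
      obtain ⟨z, hz⟩ := hq
      exact ⟨x, z, by rw [← hz]; ring⟩
    · intro h q
      obtain ⟨y, rfl⟩ := Ideal.Quotient.mk_surjective q
      obtain ⟨x, z, hz⟩ := h y
      refine ⟨Ideal.Quotient.mk _ x, ?_⟩
      rw [Ideal.quotientMap_mk, eq_comm, Ideal.Quotient.eq, Ideal.mem_span_singleton]
      exact ⟨z, by rw [hz]; ring⟩

theorem aux_tors_iff {A A' : Type u} [CommRing A] [CommRing A'] (f : A →+* A') (a : A) (n : ℕ) :
    Function.Bijective (fun x : {x : A // a ^ n * x = 0} =>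
        (⟨f x.1, by rw [← map_pow, ← map_mul, x.2, map_zero]⟩ :
          {y : A' // f a ^ n * y = 0})) ↔
    (∀ x, a ^ n * x = 0 → f x = 0 → x = 0) ∧
      (∀ y, f a ^ n * y = 0 → ∃ x, a ^ n * x = 0 ∧ f x = y) := by
  unfold Function.Bijective
  refine and_congr ?_ ?_
  · constructor
    · intro h x hx h0
      have := @h ⟨x, hx⟩ ⟨0, mul_zero _⟩ (Subtype.ext (by simpa using h0))
      exact congrArg Subtype.val this
    · rintro h ⟨x, hx⟩ ⟨y, hy⟩ hxy
      have hxy' : f x = f y := congrArg Subtype.val hxy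
      exact Subtype.ext (sub_eq_zero.1 (h (x - y) (by rw [mul_sub, hx, hy, sub_zero])
        (by rw [map_sub, hxy', sub_self])))
  · constructor
    · intro h y hy
      obtain ⟨⟨x, hx⟩, hxy⟩ := h ⟨y, hy⟩
      exact ⟨x, hx, congrArg Subtype.val hxy⟩
    · rintro h ⟨y, hy⟩
      obtain ⟨x, hx, hxy⟩ := h y hy
      exact ⟨⟨x, hx⟩, Subtype.ext hxy⟩

/-- If `f : A → A'` induces a bijection `A/aA ≅ A'/f(a)A'` and a bijection on `a`-torsion
(that is, an isomorphism on derived quotients `A/^L a ≅ A'/^L a`), then for every `n ≥ 1` it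
induces a bijection `A/aⁿA ≅ A'/f(a)ⁿA'` and a bijection on `aⁿ`-torsion (that is, an
isomorphism `A/^L aⁿ ≅ A'/^L aⁿ`). -/
theorem derived_quotient_pow_iso_of_derived_quotient_iso
    {A A' : Type u} [CommRing A] [CommRing A'] (f : A →+* A') (a : A)
    (hquot : Function.Bijective
      (Ideal.quotientMap (I := Ideal.span {a ^ 1}) (Ideal.span {f a ^ 1}) f
        (span_pow_le_comap_span_pow_image f a 1)))
    (htors : Function.Bijective (fun x : {x : A // a ^ 1 * x = 0} =>
      (⟨f x.1, by rw [← map_pow, ← map_mul, x.2, map_zero]⟩ : {y : A' // f a ^ 1 * y = 0}))) :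
    ∀ n : ℕ, 1 ≤ n →
      Function.Bijective
        (Ideal.quotientMap (I := Ideal.span {a ^ n}) (Ideal.span {f a ^ n}) f
          (span_pow_le_comap_span_pow_image f a n)) ∧
      Function.Bijective (fun x : {x : A // a ^ n * x = 0} =>
        (⟨f x.1, by rw [← map_pow, ← map_mul, x.2, map_zero]⟩ :
          {y : A' // f a ^ n * y = 0})) := by
  rw [aux_quot_iff] at hquot
  rw [aux_tors_iff] at htors
  obtain ⟨Q1, Q2⟩ := hquot
  obtain ⟨T1, T2⟩ := htors
  intro n hn
  rw [aux_quot_iff, aux_tors_iff]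
  simp only [pow_one] at Q1 Q2 T1 T2
  induction n, hn using Nat.le_induction with
  | base => simpa only [pow_one] using And.intro ⟨Q1, Q2⟩ ⟨T1, T2⟩
  | succ n hn ih =>
    obtain ⟨⟨I1, I2⟩, J1, J2⟩ := ih
    refine ⟨⟨?_, ?_⟩, ?_, ?_⟩
    · intro x z hx
      obtain ⟨x', rfl⟩ := Q1 x (f a ^ n * z) (by rw [hx]; ring)
      rw [map_mul] at hx
      obtain ⟨w, hw, hfw⟩ := T2 (f x' - f a ^ n * z) (by linear_combination hx)
      obtain ⟨t, ht⟩ := I1 (x' - w) z (by rw [map_sub, hfw]; ring)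
      exact ⟨t, by linear_combination a * ht + hw⟩
    · intro y
      obtain ⟨x, z, hy⟩ := Q2 y
      obtain ⟨x', z', hz⟩ := I2 z
      exact ⟨x + a * x', z', by rw [hy, hz, map_add, map_mul]; ring⟩
    · intro x hx h0
      refine T1 x (J1 (a * x) (by rw [← hx]; ring) (by rw [map_mul, h0, mul_zero])) h0
    · intro y hy
      obtain ⟨u, hu, hfu⟩ := J2 (f a * y) (by rw [← hy]; ring)
      obtain ⟨v, rfl⟩ := Q1 u y hfu
      rw [map_mul] at hfu
      obtain ⟨w, hw, hfw⟩ := T2 (y - f v) (by linear_combination -hfu)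
      exact ⟨v + w, by linear_combination hu + a ^ n * hw, by rw [map_add, hfw]; ring⟩
end

section
/- Let p be a prime and A a perfect commutative ring of characteristic p. Then for any a, x ∈ A, if aⁿ·x = 0 for some n ≥ 1, then a·x = 0. In particular, the a-power-torsion of A equals its a-torsion, so A has bounded a^∞-torsion for every element a ∈ A. -/
universe u

/-- In a perfect commutative ring `A` of prime characteristic `p`, if `aⁿ · x = 0` for some
`n ≥ 1`, then already `a · x = 0`: the `a`-power-torsion of `A` equals its `a`-torsion, so a
perfect ring has bounded `a^∞`-torsion for every element `a`. -/
theorem mul_eq_zero_of_pow_mul_eq_zero_of_perfect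
    (p : ℕ) [Fact p.Prime] (A : Type u) [CommRing A] [CharP A p] [PerfectRing A p]
    (a x : A) (n : ℕ) (hn : 1 ≤ n) (h : a ^ n * x = 0) : a * x = 0 := by
  have hinj : Function.Injective (frobenius A p) := (PerfectRing.bijective_frobenius).1
  have hred : ∀ (k : ℕ) (y : A), y ^ p ^ k = 0 → y = 0 := by
    intro k
    induction k with
    | zero => intro y hy; simpa using hy
    | succ k ih =>
      intro y hy
      apply ih
      apply hinj
      rw [map_zero, frobenius_def, ← pow_mul, ← pow_succ, hy]
  have hp : 1 < p := (Fact.out : p.Prime).one_lt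
  have hlt : n < p ^ n := Nat.lt_pow_self hp
  apply hred n
  apply pow_eq_zero_of_le hlt.le
  obtain ⟨m, rfl⟩ := Nat.exists_eq_add_of_le hn
  rw [mul_pow, pow_add x, pow_one, ← mul_assoc, h, zero_mul]
end

section
/- Let p be a prime, A a perfect commutative ring of characteristic p, and A' a commutative A-algebra (necessarily of characteristic p) whose Frobenius endomorphism is surjective (A' is semiperfect). Let a ∈ A be an element such that the structure map A → A' induces a bijection A/aA → A'/aA' and restricts to a bijection from the a-torsion of A onto the a-torsion of A'. Let N ⊆ A' be the kernel of the surjection from A' onto its colimit perfection A'_perf = colim_{x ↦ x^p} A'; since Frobenius of A' is surjective, N equals the nilradical of A'. Then: (i) multiplication by a is bijective on N, i.e. N is uniquely a-divisible; and (ii) the quotient map A' → A'/N induces a bijection A'/aA' → (A'/N)/a·(A'/N) and a bijection from the a-torsion of A' onto the a-torsion of A'/N (so that A'/^L a ≅ A'_perf/^L a). -/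
universe u

/-- Let `A` be a perfect ring of prime characteristic `p`, let `A'` be a semiperfect
`A`-algebra (its Frobenius is surjective), and let `a ∈ A` be such that `A → A'` induces a
bijection `A/aA ≅ A'/aA'` and a bijection on `a`-torsion. Let `N` be the kernel of the
surjection of `A'` onto its colimit perfection, which (as Frobenius of `A'` is surjective)
is the nilradical of `A'`. Then (i) multiplication by `a` is bijective on `N`, i.e. `N` is
uniquely `a`-divisible, and (ii) the quotient map `A' → A'/N = A'_perf` induces a bijection
modulo `a` and a bijection on `a`-torsion (so that `A'/^L a ≅ A'_perf/^L a`). -/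
theorem nilradical_uniquely_divisible_and_perfection_mod_a
    (p : ℕ) [Fact p.Prime] {A A' : Type u} [CommRing A] [CommRing A']
    [CharP A p] [PerfectRing A p] [Algebra A A']
    (hsemi : Function.Surjective (fun x : A' => x ^ p))
    (a : A)
    (hquot : Function.Bijective
      (Ideal.quotientMap (I := Ideal.span {a}) (Ideal.span {algebraMap A A' a})
        (algebraMap A A') (span_singleton_le_comap_span_singleton_image (algebraMap A A') a)))
    (htors : Function.Bijective (fun x : {x : A // a * x = 0} =>
      (⟨algebraMap A A' x.1, by rw [← map_mul, x.2, map_zero]⟩ :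
        {y : A' // algebraMap A A' a * y = 0}))) :
    Function.Bijective (fun x : nilradical A' =>
      (⟨algebraMap A A' a * x.1, Ideal.mul_mem_left _ _ x.2⟩ : nilradical A')) ∧
    Function.Bijective
      (Ideal.quotientMap (I := Ideal.span {algebraMap A A' a})
        (Ideal.span {Ideal.Quotient.mk (nilradical A') (algebraMap A A' a)})
        (Ideal.Quotient.mk (nilradical A'))
        (span_singleton_le_comap_span_singleton_image
          (Ideal.Quotient.mk (nilradical A')) (algebraMap A A' a))) ∧
    Function.Bijective (fun y : {y : A' // algebraMap A A' a * y = 0} =>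
      (⟨Ideal.Quotient.mk (nilradical A') y.1, by rw [← map_mul, y.2, map_zero]⟩ :
        {z : A' ⧸ nilradical A' //
          Ideal.Quotient.mk (nilradical A') (algebraMap A A' a) * z = 0})) := by
  set f := algebraMap A A' with hf
  have hp : p.Prime := Fact.out
  -- elementwise forms of the hypotheses
  have Q1 : ∀ b : A, ∀ y : A', f b = f a * y → ∃ c, b = a * c := by
    intro b y hb
    have h0 : Ideal.Quotient.mk (Ideal.span {a}) b = 0 := by
      apply hquot.1
      rw [map_zero, Ideal.quotientMap_mk, Ideal.Quotient.eq_zero_iff_mem,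
        Ideal.mem_span_singleton]
      exact ⟨y, hb⟩
    rw [Ideal.Quotient.eq_zero_iff_mem, Ideal.mem_span_singleton] at h0
    exact h0
  have Q2 : ∀ x : A', ∃ b : A, ∃ y : A', f b = x - f a * y := by
    intro x
    obtain ⟨b', hb⟩ := hquot.2 (Ideal.Quotient.mk _ x)
    obtain ⟨b, rfl⟩ := Ideal.Quotient.mk_surjective b'
    rw [Ideal.quotientMap_mk, Ideal.Quotient.eq, Ideal.mem_span_singleton] at hb
    obtain ⟨y, hy⟩ := hb
    exact ⟨b, -y, by linear_combination hy⟩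
  have T1 : ∀ t : A, a * t = 0 → f t = 0 → t = 0 := by
    intro t ht h
    have := @htors.1 ⟨t, ht⟩ ⟨0, mul_zero _⟩ (Subtype.ext (by simpa using h))
    exact congrArg Subtype.val this
  have T2 : ∀ y : A', f a * y = 0 → ∃ t : A, a * t = 0 ∧ f t = y := by
    intro y hy
    obtain ⟨t, ht⟩ := htors.2 ⟨y, hy⟩
    exact ⟨t.1, t.2, congrArg Subtype.val ht⟩
  -- powers of `a`
  have Q1m : ∀ m : ℕ, ∀ b : A, ∀ y : A', f b = f a ^ m * y → ∃ c, b = a ^ m * c := by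
    intro m
    induction m with
    | zero => intro b y _; exact ⟨b, by simp⟩
    | succ m ih =>
      intro b y hb
      obtain ⟨c, rfl⟩ := Q1 b (f a ^ m * y) (by rw [hb]; ring)
      obtain ⟨t, ht, hft⟩ := T2 (f c - f a ^ m * y) (by
        rw [map_mul] at hb; linear_combination hb)
      obtain ⟨d, hd⟩ := ih (c - t) y (by rw [map_sub, hft]; ring)
      exact ⟨d, by linear_combination a * hd + ht⟩
  have T2m : ∀ m : ℕ, ∀ y : A', f a ^ m * y = 0 → ∃ t : A, a ^ m * t = 0 ∧ f t = y := by
    intro m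
    induction m with
    | zero => intro y hy; exact ⟨0, by simp, by simpa using hy.symm⟩
    | succ m ih =>
      intro y hy
      obtain ⟨t, ht, hft⟩ := ih (f a * y) (by rw [← hy]; ring)
      obtain ⟨s, rfl⟩ := Q1 t y hft
      obtain ⟨u, hu, hfu⟩ := T2 (y - f s) (by
        rw [map_mul] at hft; linear_combination -hft)
      exact ⟨s + u, by linear_combination ht + a ^ m * hu, by rw [map_add, hfu]; ring⟩
  have hsub : ∀ (x y : A') (n : ℕ), (x - y) ^ p ^ n = x ^ p ^ n - y ^ p ^ n := by
    intro x y n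
    rcases subsingleton_or_nontrivial A' with h | h
    · exact Subsingleton.elim _ _
    · have : CharP A' p := (CharP.charP_iff_prime_eq_zero hp).2 (by
        rw [← map_natCast f, CharP.cast_eq_zero, map_zero])
      exact sub_pow_char_pow x y n
  have hnil : ∀ x ∈ nilradical A', ∃ n : ℕ, x ^ p ^ n = 0 := by
    intro x hx
    obtain ⟨k, hk⟩ := mem_nilradical.1 hx
    exact ⟨k, pow_eq_zero_of_le (Nat.lt_pow_self hp.one_lt).le hk⟩
  have hinj : ∀ (n : ℕ) (x y : A), x ^ p ^ n = y ^ p ^ n → x = y := by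
    intro n x y h
    exact (bijective_iterateFrobenius A p n).1 (by simpa [iterateFrobenius_def] using h)
  have hsurj : ∀ (n : ℕ) (y : A), ∃ x, x ^ p ^ n = y := by
    intro n y
    obtain ⟨x, hx⟩ := (bijective_iterateFrobenius A p n).2 y
    exact ⟨x, by simpa [iterateFrobenius_def] using hx⟩
  have hpos : ∀ n : ℕ, p ^ n ≠ 0 := fun n => pow_ne_zero _ hp.ne_zero
  -- no `a`-torsion in the nilradical
  have N1 : ∀ x ∈ nilradical A', f a * x = 0 → x = 0 := by
    intro x hx h
    obtain ⟨n, hn⟩ := hnil x hx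
    obtain ⟨t, ht, rfl⟩ := T2 x h
    have h1 : t ^ p ^ n = 0 := by
      apply T1
      · obtain ⟨k, hk⟩ := Nat.exists_eq_succ_of_ne_zero (hpos n)
        rw [hk, pow_succ', ← mul_assoc, ht, zero_mul]
      · rw [map_pow, hn]
    have h2 : t = 0 := hinj n t 0 (by rw [h1, zero_pow (hpos n)])
    rw [h2, map_zero]
  -- the nilradical is `a`-divisible
  have N2 : ∀ x ∈ nilradical A', ∃ w ∈ nilradical A', f a * w = x := by
    intro x hx
    obtain ⟨n, hn⟩ := hnil x hx
    obtain ⟨b, y, hb⟩ := Q2 x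
    obtain ⟨c, hc⟩ := Q1m (p ^ n) (b ^ p ^ n) (-(y ^ p ^ n)) (by
      rw [map_pow, hb, hsub, hn, mul_pow]; ring)
    obtain ⟨d, rfl⟩ := hsurj n c
    have hbd : b = a * d := hinj n _ _ (by rw [hc, mul_pow])
    have hx' : x = f a * (f d + y) := by
      rw [hbd, map_mul] at hb; linear_combination -hb
    obtain ⟨t, ht, hft⟩ := T2m (p ^ n) ((f d + y) ^ p ^ n) (by
      rw [← mul_pow, ← hx', hn])
    obtain ⟨s, rfl⟩ := hsurj n t
    have has : a * s = 0 := hinj n _ _ (by rw [mul_pow, ht, zero_pow (hpos n)])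
    refine ⟨f d + y - f s, mem_nilradical.2 ⟨p ^ n, ?_⟩, ?_⟩
    · rw [hsub, ← hft, map_pow, sub_self]
    · rw [mul_sub, ← map_mul f a s, has, map_zero, sub_zero, hx']
  refine ⟨⟨?_, ?_⟩, ⟨?_, ?_⟩, ⟨?_, ?_⟩⟩
  · rintro ⟨x, hx⟩ ⟨y, hy⟩ h
    have h' : f a * x = f a * y := congrArg Subtype.val h
    exact Subtype.ext (sub_eq_zero.1 (N1 (x - y) (Ideal.sub_mem _ hx hy) (by
      rw [mul_sub, h', sub_self])))
  · rintro ⟨x, hx⟩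
    obtain ⟨w, hw, h⟩ := N2 x hx
    exact ⟨⟨w, hw⟩, Subtype.ext h⟩
  · rw [injective_iff_map_eq_zero]
    intro x' hx'
    obtain ⟨x, rfl⟩ := Ideal.Quotient.mk_surjective x'
    rw [Ideal.quotientMap_mk, Ideal.Quotient.eq_zero_iff_mem, Ideal.mem_span_singleton] at hx'
    obtain ⟨y', hy⟩ := hx'
    obtain ⟨y, rfl⟩ := Ideal.Quotient.mk_surjective y'
    rw [← map_mul, Ideal.Quotient.eq] at hy
    obtain ⟨w, -, hw⟩ := N2 _ hy
    rw [Ideal.Quotient.eq_zero_iff_mem, Ideal.mem_span_singleton]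
    exact ⟨y + w, by linear_combination -hw⟩
  · exact Ideal.quotientMap_surjective Ideal.Quotient.mk_surjective
  · rintro ⟨x, hx⟩ ⟨y, hy⟩ h
    have h' := congrArg Subtype.val h
    simp only [Ideal.Quotient.eq] at h'
    exact Subtype.ext (sub_eq_zero.1 (N1 (x - y) h' (by rw [mul_sub, hx, hy, sub_self])))
  · rintro ⟨z', hz⟩
    obtain ⟨z, rfl⟩ := Ideal.Quotient.mk_surjective z'
    have hz' := hz
    rw [← map_mul, Ideal.Quotient.eq_zero_iff_mem] at hz'
    obtain ⟨w, hw, h⟩ := N2 _ hz'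
    refine ⟨⟨z - w, by rw [mul_sub, h, sub_self]⟩, Subtype.ext ?_⟩
    simp only [Ideal.Quotient.eq]
    simpa using hw
end
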